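/- Let d > 1 be an integer and r > 0. Let A ⊂ ℝ^d be a nonempty r-ball body (i.e., A = X^r for some nonempty X ⊆ ℝ^d) with A^r nonempty. Then V_d(A)^{1/d} + V_d(A^r)^{1/d} ≤ V_d(B[o,r])^{1/d}, where o is the origin, and equality holds if and only if A is a closed ball B[p, ρ] for some p ∈ ℝ^d and some 0 ≤ ρ ≤ r. -/

import Mathlib

/-!
Every `a ∈ A` and `b ∈ A^r` satisfy `|a - b| ≤ r`, so `A + (-A^r) ⊆ B[o,r]` and the inequality is
an instance of Brunn–Minkowski for compact convex sets (`addBM`).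

Brunn–Minkowski is proved in multiplicative form by induction on the dimension (`mulBM`). By the
inductive hypothesis the volume of the slices `{x 0 = s}` is a log-concave function of `s`, hence
continuous and positive on an interval. Parametrizing the heights of the two bodies by the
fraction of volume below (`IsQuantile`) and integrating along the interpolated parametrization
reduces the claim to the weighted AM–GM inequality (`transport_le`, `prekopa_leindler_bump`). For
two bodies of equal volume whose midpoint body has no larger volume, AM–GM is an equality at
every height, so the two parametrizations differ by a constant, which vanishes if the first
moments agree; in particular the bodies have the same support value in the slicing direction
(`support_eq_of_volume_midpoint_le`).

For the equality case of the theorem, suppose `A + C ⊆ B[o,r]` attains equality. For linear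
isometries `P` and `Q` the averages `(PA + QA)/2` and `(PC + QC)/2` again add up to a subset of
`B[o,r]` and are at least as large as `A` and `C`, so `(PA + QA)/2` has the volume of `A`
(`volume_average_le`). With the barycentre of `A` at the origin and `P`, `Q` taking two given unit
vectors to the slicing direction, the support values of `A` at these two vectors agree
(`support_eq_of_extremal`). A compact convex set with constant support function is a ball.
If `A` or `A^r` is a null set, the other one fills a ball of radius `r`.
-/

open MeasureTheory Metric

noncomputable section

/-- The `r`-ball body generated by a set `X ⊆ ℝ^d`. -/
def ballBody {d : ℕ} (r : ℝ) (X : Set (EuclideanSpace ℝ (Fin d))) :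
    Set (EuclideanSpace ℝ (Fin d)) :=
  ⋂ x ∈ X, closedBall x r

open Set Filter Topology
open scoped Pointwise ENNReal

/-! ### Quantile functions and the one-dimensional Prékopa–Leindler inequality -/

/-- A density on the line that is continuous and positive on the open interval `(a, b)` and
vanishes off `[a, b]`. The values at `a` and `b` are unrestricted. -/
structure IsBump (f : ℝ → ℝ) (a b : ℝ) : Prop where
  lt : a < b
  cont : ContinuousOn f (Ioo a b)
  pos : ∀ x ∈ Ioo a b, 0 < f x
  zero : ∀ x, x ∉ Icc a b → f x = 0
  int : Integrable f

/-- `z` is the quantile function of the density `f` on `(a, b)`: it parametrizes `(a, b)` by the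
fraction `θ ∈ (0, 1)` of the total mass lying to the left, so that `z' = (∫ f) / f ∘ z`. -/
structure IsQuantile (f : ℝ → ℝ) (a b : ℝ) (z : ℝ → ℝ) : Prop where
  image : z '' Ioo 0 1 = Ioo a b
  deriv : ∀ θ ∈ Ioo (0 : ℝ) 1, HasDerivAt z ((∫ x, f x) / f (z θ)) θ
  mono : StrictMonoOn z (Ioo 0 1)

lemma IsBump.integral_eq {f : ℝ → ℝ} {a b : ℝ} (h : IsBump f a b) :
    ∫ x in a..b, f x = ∫ x, f x := by
  rw [intervalIntegral.integral_of_le h.lt.le, ← integral_Icc_eq_integral_Ioc]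
  exact setIntegral_eq_integral_of_forall_compl_eq_zero h.zero

lemma IsBump.integral_pos {f : ℝ → ℝ} {a b : ℝ} (h : IsBump f a b) : 0 < ∫ x, f x := by
  rw [← h.integral_eq]
  exact intervalIntegral.intervalIntegral_pos_of_pos_on h.int.intervalIntegrable h.pos h.lt

lemma IsBump.exists_quantile {f : ℝ → ℝ} {a b : ℝ} (h : IsBump f a b) :
    ∃ z, IsQuantile f a b z := by
  set I := ∫ x, f x with hI
  have hIpos : 0 < I := h.integral_pos
  set F : ℝ → ℝ := fun x => (∫ u in a..x, f u) / I with hF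
  have hFa : F a = 0 := by simp [hF]
  have hFb : F b = 1 := by simp [hF, h.integral_eq, ← hI, hIpos.ne']
  have hFc : Continuous F :=
    (intervalIntegral.continuous_primitive (fun _ _ => h.int.intervalIntegrable) a).div_const I
  have hFd : ∀ x ∈ Ioo a b, HasDerivAt F (f x / I) x := by
    intro x hx
    refine HasDerivAt.div_const ?_ I
    exact intervalIntegral.integral_hasDerivAt_right h.int.intervalIntegrable
      (h.int.aestronglyMeasurable.stronglyMeasurableAtFilter)
      (h.cont.continuousAt (Ioo_mem_nhds hx.1 hx.2))
  have hFm : StrictMonoOn F (Icc a b) := by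
    apply strictMonoOn_of_deriv_pos (convex_Icc a b) hFc.continuousOn
    intro x hx
    rw [interior_Icc] at hx
    rw [(hFd x hx).deriv]
    exact div_pos (h.pos x hx) hIpos
  have hex : ∀ θ : ℝ, ∃ x, θ ∈ Ioo (0 : ℝ) 1 → x ∈ Ioo a b ∧ F x = θ := by
    intro θ
    by_cases hθ : θ ∈ Ioo (0 : ℝ) 1
    · have := intermediate_value_Ioo h.lt.le hFc.continuousOn
      rw [hFa, hFb] at this
      obtain ⟨x, hx, hxe⟩ := this hθ
      exact ⟨x, fun _ => ⟨hx, hxe⟩⟩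
    · exact ⟨0, fun h => absurd h hθ⟩
  choose z hz using hex
  have hmono : StrictMonoOn z (Ioo 0 1) := by
    intro s hs t ht hst
    by_contra! hcon
    have := hFm.monotoneOn (Ioo_subset_Icc_self (hz t ht).1) (Ioo_subset_Icc_self (hz s hs).1) hcon
    rw [(hz t ht).2, (hz s hs).2] at this
    linarith
  have himage : z '' Ioo 0 1 = Ioo a b := by
    apply Subset.antisymm
    · rintro _ ⟨θ, hθ, rfl⟩
      exact (hz θ hθ).1
    · intro x hx
      have h1 : F x ∈ Ioo (0 : ℝ) 1 := by
        constructor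
        · rw [← hFa]
          exact hFm (left_mem_Icc.2 h.lt.le) (Ioo_subset_Icc_self hx) hx.1
        · rw [← hFb]
          exact hFm (Ioo_subset_Icc_self hx) (right_mem_Icc.2 h.lt.le) hx.2
      refine ⟨F x, h1, ?_⟩
      exact hFm.injOn (Ioo_subset_Icc_self (hz _ h1).1) (Ioo_subset_Icc_self hx) (hz _ h1).2
  refine ⟨z, himage, ?_, hmono⟩
  intro θ hθ
  have hzθ := (hz θ hθ).1
  have hcz : ContinuousAt z θ :=
    hmono.continuousAt_of_image_mem_nhds (Ioo_mem_nhds hθ.1 hθ.2)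
      (by rw [himage]; exact Ioo_mem_nhds hzθ.1 hzθ.2)
  have := HasDerivAt.of_local_left_inverse hcz (hFd _ hzθ) (div_pos (h.pos _ hzθ) hIpos).ne'
    (by filter_upwards [Ioo_mem_nhds hθ.1 hθ.2] with y hy using (hz y hy).2)
  simpa using this

lemma IsQuantile.mem {f z : ℝ → ℝ} {a b θ : ℝ} (h : IsQuantile f a b z) (hθ : θ ∈ Ioo (0 : ℝ) 1) :
    z θ ∈ Ioo a b := h.image ▸ mem_image_of_mem z hθ

lemma IsQuantile.continuousOn {f z : ℝ → ℝ} {a b : ℝ} (h : IsQuantile f a b z) :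
    ContinuousOn z (Ioo 0 1) := fun θ hθ => (h.deriv θ hθ).continuousAt.continuousWithinAt

/-- The first moment of a density in terms of its quantile function. -/
lemma IsQuantile.moment {f z : ℝ → ℝ} {a b : ℝ} (hf : IsBump f a b) (h : IsQuantile f a b z) :
    ∫ x, f x * x = ∫ θ in Ioo (0 : ℝ) 1, (∫ x, f x) * z θ := by
  have h1 : ∫ x, f x * x = ∫ x in Ioo a b, f x * x := by
    rw [← integral_Icc_eq_integral_Ioo]
    refine (setIntegral_eq_integral_of_forall_compl_eq_zero ?_).symm
    intro x hx
    rw [hf.zero x hx, zero_mul]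
  rw [h1, ← h.image, integral_image_eq_integral_abs_deriv_smul measurableSet_Ioo
    (fun x hx => (h.deriv x hx).hasDerivWithinAt) h.mono.injOn]
  refine setIntegral_congr_fun measurableSet_Ioo ?_
  intro θ hθ
  have hp := hf.pos _ (h.mem hθ)
  simp only [smul_eq_mul]
  rw [abs_of_pos (div_pos hf.integral_pos hp)]
  field_simp

/-- The transport estimate behind the one-dimensional Prékopa–Leindler inequality: `h` is
integrated along the interpolation of the two quantile functions. -/
lemma transport_le {f g zf zg : ℝ → ℝ} {h : ℝ → ℝ≥0∞} {a b a' b' s t : ℝ}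
    (hf : IsBump f a b) (hg : IsBump g a' b')
    (hzf : IsQuantile f a b zf) (hzg : IsQuantile g a' b' zg)
    (hs : 0 < s) (ht : 0 < t)
    (hh : ∀ x y, ENNReal.ofReal (f x ^ s * g y ^ t) ≤ h (s * x + t * y)) :
    ∫⁻ θ in Ioo (0 : ℝ) 1, ENNReal.ofReal
      ((s * ((∫ x, f x) / f (zf θ)) + t * ((∫ x, g x) / g (zg θ))) *
        (f (zf θ) ^ s * g (zg θ) ^ t)) ≤ ∫⁻ x, h x := by
  set z : ℝ → ℝ := fun θ => s * zf θ + t * zg θ with hz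
  have hzm : StrictMonoOn z (Ioo 0 1) := by
    intro x hx y hy hxy
    have h1 := hzf.mono hx hy hxy
    have h2 := hzg.mono hx hy hxy
    simp only [hz]
    gcongr
  have hzd : ∀ θ ∈ Ioo (0 : ℝ) 1, HasDerivWithinAt z
      (s * ((∫ x, f x) / f (zf θ)) + t * ((∫ x, g x) / g (zg θ))) (Ioo 0 1) θ := by
    intro θ hθ
    exact (((hzf.deriv θ hθ).const_mul s).add ((hzg.deriv θ hθ).const_mul t)).hasDerivWithinAt
  calc _ ≤ ∫⁻ θ in Ioo (0 : ℝ) 1,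
          ENNReal.ofReal |s * ((∫ x, f x) / f (zf θ)) + t * ((∫ x, g x) / g (zg θ))| *
            h (z θ) := by
        refine setLIntegral_mono' measurableSet_Ioo ?_
        intro θ hθ
        have h1 := hf.pos _ (hzf.mem hθ)
        have h2 := hg.pos _ (hzg.mem hθ)
        have h3 := hf.integral_pos
        have h4 := hg.integral_pos
        rw [abs_of_pos (by positivity), ENNReal.ofReal_mul (by positivity)]
        gcongr
        exact hh _ _
    _ = ∫⁻ x in z '' Ioo 0 1, h x :=
        (lintegral_image_eq_lintegral_abs_deriv_mul measurableSet_Ioo hzd hzm.injOn h).symm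
    _ ≤ ∫⁻ x, h x := setLIntegral_le_lintegral _ _

/-- Weighted AM–GM in the form needed for the transport integrand. -/
lemma amgm_integrand {I J p q s t : ℝ} (hI : 0 < I) (hJ : 0 < J) (hp : 0 < p) (hq : 0 < q)
    (hs : 0 < s) (ht : 0 < t) (hst : s + t = 1) :
    I ^ s * J ^ t ≤ (s * (I / p) + t * (J / q)) * (p ^ s * q ^ t) := by
  have h := Real.geom_mean_le_arith_mean2_weighted hs.le ht.le (div_pos hI hp).le
    (div_pos hJ hq).le hst
  rw [Real.div_rpow hI.le hp.le, Real.div_rpow hJ.le hq.le] at h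
  have h1 : 0 < p ^ s * q ^ t := by positivity
  calc I ^ s * J ^ t = I ^ s / p ^ s * (J ^ t / q ^ t) * (p ^ s * q ^ t) := by
        field_simp
    _ ≤ _ := by gcongr

lemma prekopa_leindler_bump {f g : ℝ → ℝ} {h : ℝ → ℝ≥0∞} {a b a' b' s t : ℝ}
    (hf : IsBump f a b) (hg : IsBump g a' b') (hs : 0 < s) (ht : 0 < t) (hst : s + t = 1)
    (hh : ∀ x y, ENNReal.ofReal (f x ^ s * g y ^ t) ≤ h (s * x + t * y)) :
    ENNReal.ofReal ((∫ x, f x) ^ s * (∫ x, g x) ^ t) ≤ ∫⁻ x, h x := by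
  obtain ⟨zf, hzf⟩ := hf.exists_quantile
  obtain ⟨zg, hzg⟩ := hg.exists_quantile
  refine le_trans ?_ (transport_le hf hg hzf hzg hs ht hh)
  calc _ = ∫⁻ _ in Ioo (0 : ℝ) 1, ENNReal.ofReal ((∫ x, f x) ^ s * (∫ x, g x) ^ t) := by simp
    _ ≤ _ := by
        refine setLIntegral_mono' measurableSet_Ioo ?_
        intro θ hθ
        exact ENNReal.ofReal_le_ofReal (amgm_integrand hf.integral_pos hg.integral_pos
          (hf.pos _ (hzf.mem hθ)) (hg.pos _ (hzg.mem hθ)) hs ht hst)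

/-- Equality case of the midpoint Prékopa–Leindler inequality for densities with equal mass and
equal first moment: equality in AM–GM along the transport makes the quantile functions have the
same derivative, and the moments exclude a translation. -/
lemma prekopa_leindler_bump_eq {f g : ℝ → ℝ} {h : ℝ → ℝ≥0∞} {a b a' b' : ℝ}
    (hf : IsBump f a b) (hg : IsBump g a' b') (hI : ∫ x, f x = ∫ x, g x)
    (hmom : ∫ x, f x * x = ∫ x, g x * x)
    (hh : ∀ x y, ENNReal.ofReal (f x ^ (1 / 2 : ℝ) * g y ^ (1 / 2 : ℝ)) ≤
      h (1 / 2 * x + 1 / 2 * y))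
    (hle : ∫⁻ x, h x ≤ ENNReal.ofReal (∫ x, f x)) : b = b' := by
  obtain ⟨zf, hzf⟩ := hf.exists_quantile
  obtain ⟨zg, hzg⟩ := hg.exists_quantile
  have htr := (transport_le hf hg hzf hzg (by norm_num) (by norm_num) hh).trans hle
  set I := ∫ x, f x with hIdef
  rw [← hI] at htr
  have hIpos : 0 < I := hf.integral_pos
  set Φ : ℝ → ℝ := fun θ => (1 / 2 * (I / f (zf θ)) + 1 / 2 * (I / g (zg θ))) *
        (f (zf θ) ^ (1 / 2 : ℝ) * g (zg θ) ^ (1 / 2 : ℝ)) with hΦ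
  have hfc : ContinuousOn (fun θ => f (zf θ)) (Ioo 0 1) :=
    hf.cont.comp hzf.continuousOn (fun θ hθ => hzf.mem hθ)
  have hgc : ContinuousOn (fun θ => g (zg θ)) (Ioo 0 1) :=
    hg.cont.comp hzg.continuousOn (fun θ hθ => hzg.mem hθ)
  have hfp : ∀ θ ∈ Ioo (0 : ℝ) 1, 0 < f (zf θ) := fun θ hθ => hf.pos _ (hzf.mem hθ)
  have hgp : ∀ θ ∈ Ioo (0 : ℝ) 1, 0 < g (zg θ) := fun θ hθ => hg.pos _ (hzg.mem hθ)
  have hΦc : ContinuousOn Φ (Ioo 0 1) := by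
    refine ContinuousOn.mul ?_ ?_
    · exact (continuousOn_const.mul (continuousOn_const.div hfc fun θ hθ => (hfp θ hθ).ne')).add
        (continuousOn_const.mul (continuousOn_const.div hgc fun θ hθ => (hgp θ hθ).ne'))
    · exact (hfc.rpow_const fun θ hθ => Or.inr (by norm_num)).mul
        (hgc.rpow_const fun θ hθ => Or.inr (by norm_num))
  have hΦge : ∀ θ ∈ Ioo (0 : ℝ) 1, I ≤ Φ θ := by
    intro θ hθ
    have := amgm_integrand hIpos hIpos (hfp θ hθ) (hgp θ hθ) (s := 1 / 2) (t := 1 / 2)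
      (by norm_num) (by norm_num) (by norm_num)
    rwa [← Real.rpow_add hIpos, show (1 / 2 : ℝ) + 1 / 2 = 1 by norm_num, Real.rpow_one] at this
  have hae : (fun _ : ℝ => ENNReal.ofReal I) =ᵐ[volume.restrict (Ioo 0 1)]
      fun θ => ENNReal.ofReal (Φ θ) := by
    refine ae_eq_of_ae_le_of_lintegral_le ?_ (by simp) ?_ (htr.trans (by simp))
    · filter_upwards [ae_restrict_mem measurableSet_Ioo] with θ hθ
      exact ENNReal.ofReal_le_ofReal (hΦge θ hθ)
    · exact (hΦc.aemeasurable measurableSet_Ioo).ennreal_ofReal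
  have hEq := Measure.eqOn_open_of_ae_eq hae isOpen_Ioo continuousOn_const
    (ENNReal.continuous_ofReal.comp_continuousOn hΦc)
  have hfg : ∀ θ ∈ Ioo (0 : ℝ) 1, f (zf θ) = g (zg θ) := by
    intro θ hθ
    have h1 : I = Φ θ := by
      have := hEq hθ
      rwa [ENNReal.ofReal_eq_ofReal_iff hIpos.le (hIpos.le.trans (hΦge θ hθ))] at this
    have hp := hfp θ hθ
    have hq := hgp θ hθ
    simp only [hΦ, ← Real.sqrt_eq_rpow] at h1
    obtain ⟨x, hx, hx'⟩ : ∃ x, 0 < x ∧ f (zf θ) = x ^ 2 :=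
      ⟨√(f (zf θ)), Real.sqrt_pos.2 hp, (Real.sq_sqrt hp.le).symm⟩
    obtain ⟨y, hy, hy'⟩ : ∃ y, 0 < y ∧ g (zg θ) = y ^ 2 :=
      ⟨√(g (zg θ)), Real.sqrt_pos.2 hq, (Real.sq_sqrt hq.le).symm⟩
    rw [hx', hy', Real.sqrt_sq hx.le, Real.sqrt_sq hy.le] at h1
    field_simp at h1
    have : (x - y) ^ 2 = 0 := by nlinarith
    have : x = y := by nlinarith [pow_eq_zero_iff (two_ne_zero) |>.1 this]
    rw [hx', hy', this]
  have hconst : ∃ c, ∀ θ ∈ Ioo (0 : ℝ) 1, zf θ - zg θ = c := by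
    have hd : ∀ θ ∈ Ioo (0 : ℝ) 1, HasDerivAt (fun θ => zf θ - zg θ) 0 θ := by
      intro θ hθ
      have := (hzf.deriv θ hθ).sub (hzg.deriv θ hθ)
      rw [← hI, hfg θ hθ, sub_self] at this
      exact this
    refine ⟨zf (1 / 2) - zg (1 / 2), fun θ hθ => ?_⟩
    exact isOpen_Ioo.is_const_of_deriv_eq_zero isPreconnected_Ioo
      (fun x hx => (hd x hx).differentiableAt.differentiableWithinAt)
      (fun x hx => (hd x hx).deriv) hθ (by norm_num : (1 / 2 : ℝ) ∈ Ioo (0 : ℝ) 1)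
  obtain ⟨c, hc⟩ := hconst
  have hbdd : ∀ {f z : ℝ → ℝ} {a b : ℝ}, IsQuantile f a b z → IntegrableOn z (Ioo 0 1) := by
    intro f z a b hz
    refine Integrable.of_bound (hz.continuousOn.aestronglyMeasurable measurableSet_Ioo)
      (max |a| |b|) ?_
    filter_upwards [ae_restrict_mem measurableSet_Ioo] with θ hθ
    exact abs_le_max_abs_abs (hz.mem hθ).1.le (hz.mem hθ).2.le
  have hc0 : c = 0 := by
    rw [hzf.moment hf, hzg.moment hg, ← hI, integral_const_mul, integral_const_mul] at hmom
    have h1 := mul_left_cancel₀ hIpos.ne' hmom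
    have h2 : ∫ θ in Ioo (0 : ℝ) 1, (zf θ - zg θ) = c := by
      rw [setIntegral_congr_fun measurableSet_Ioo hc]
      simp
    rw [integral_sub (hbdd hzf) (hbdd hzg), h1, sub_self] at h2
    exact h2.symm
  have himg : Ioo a b = Ioo a' b' := by
    rw [← hzf.image, ← hzg.image]
    exact image_congr fun θ hθ => by linarith [hc θ hθ]
  rw [← csSup_Ioo hf.lt, himg, csSup_Ioo hg.lt]

/-! ### Slices and Brunn–Minkowski by induction on the dimension -/

/-- The slice of a subset of `ℝ^(n+1)` at height `s` of the zeroth coordinate. -/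
def slice {n : ℕ} (A : Set (Fin (n + 1) → ℝ)) (s : ℝ) : Set (Fin n → ℝ) :=
  {y | (Fin.cons s y : Fin (n + 1) → ℝ) ∈ A}

lemma cons_combo {n : ℕ} (s t x y : ℝ) (u v : Fin n → ℝ) :
    s • (Fin.cons x u : Fin (n + 1) → ℝ) + t • (Fin.cons y v : Fin (n + 1) → ℝ) =
      Fin.cons (s * x + t * y) (s • u + t • v) := by
  ext i
  refine Fin.cases ?_ (fun j => ?_) i <;> simp

lemma slice_combo {n : ℕ} (A C : Set (Fin (n + 1) → ℝ)) (s t x y : ℝ) :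
    s • slice A x + t • slice C y ⊆ slice (s • A + t • C) (s * x + t * y) := by
  rintro _ ⟨_, ⟨u, hu, rfl⟩, _, ⟨v, hv, rfl⟩, rfl⟩
  change (Fin.cons (s * x + t * y) (s • u + t • v) : Fin (n + 1) → ℝ) ∈ s • A + t • C
  rw [← cons_combo]
  exact Set.add_mem_add (smul_mem_smul_set hu) (smul_mem_smul_set hv)

lemma slice_convex {n : ℕ} {A : Set (Fin (n + 1) → ℝ)} (hA : Convex ℝ A) (s : ℝ) :
    Convex ℝ (slice A s) := by
  intro u hu v hv p q hp hq hpq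
  change (Fin.cons s (p • u + q • v) : Fin (n + 1) → ℝ) ∈ A
  have := hA hu hv hp hq hpq
  rwa [cons_combo, ← add_mul, hpq, one_mul] at this

lemma slice_isCompact {n : ℕ} {A : Set (Fin (n + 1) → ℝ)} (hA : IsCompact A) (s : ℝ) :
    IsCompact (slice A s) := by
  have hc : Continuous fun y : Fin n → ℝ => (Fin.cons s y : Fin (n + 1) → ℝ) := by fun_prop
  have ht : Continuous fun x : Fin (n + 1) → ℝ => fun i : Fin n => x i.succ := by fun_prop
  refine (hA.image ht).of_isClosed_subset (hA.isClosed.preimage hc) ?_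
  intro y hy
  exact ⟨_, hy, by ext i; simp⟩

lemma piFinSuccAbove_symm_eq {n : ℕ} (s : ℝ) (y : Fin n → ℝ) :
    (MeasurableEquiv.piFinSuccAbove (fun _ : Fin (n + 1) => ℝ) 0).symm (s, y) =
      (Fin.cons s y : Fin (n + 1) → ℝ) := by
  ext i
  refine Fin.cases ?_ (fun j => ?_) i <;> simp [MeasurableEquiv.piFinSuccAbove]

lemma measurable_slice_volume {n : ℕ} {A : Set (Fin (n + 1) → ℝ)} (hA : MeasurableSet A) :
    Measurable fun s => volume (slice A s) := by
  have := measurable_measure_prodMk_left (ν := (volume : Measure (Fin n → ℝ)))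
    ((MeasurableEquiv.piFinSuccAbove (fun _ : Fin (n + 1) => ℝ) 0).symm.measurable hA)
  convert this using 3 with s
  ext y
  change _ ↔ (MeasurableEquiv.piFinSuccAbove (fun _ : Fin (n + 1) => ℝ) 0).symm (s, y) ∈ A
  rw [piFinSuccAbove_symm_eq]
  rfl

lemma volume_eq_lintegral_slice {n : ℕ} {A : Set (Fin (n + 1) → ℝ)} (hA : MeasurableSet A) :
    volume A = ∫⁻ s, volume (slice A s) := by
  have hmp := (volume_preserving_piFinSuccAbove (fun _ : Fin (n + 1) => ℝ) 0).symm
  rw [← hmp.measure_preimage hA.nullMeasurableSet]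
  refine (Measure.prod_apply (hmp.measurable hA)).trans ?_
  refine lintegral_congr fun s => ?_
  congr 1
  ext y
  change (MeasurableEquiv.piFinSuccAbove (fun _ : Fin (n + 1) => ℝ) 0).symm (s, y) ∈ A ↔ _
  rw [piFinSuccAbove_symm_eq]
  rfl

lemma integral_coord_eq_slice {n : ℕ} {A : Set (Fin (n + 1) → ℝ)} (hA : IsCompact A) :
    ∫ x in A, x 0 = ∫ s, (volume (slice A s)).toReal * s := by
  have hmp := (volume_preserving_piFinSuccAbove (fun _ : Fin (n + 1) => ℝ) 0).symm
  set e := (MeasurableEquiv.piFinSuccAbove (fun _ : Fin (n + 1) => ℝ) 0).symm with he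
  have hint : IntegrableOn (fun x : Fin (n + 1) → ℝ => x 0) A :=
    (continuous_apply 0).continuousOn.integrableOn_compact hA
  rw [← integral_indicator hA.measurableSet]
  rw [← integrable_indicator_iff hA.measurableSet] at hint
  rw [← hmp.integral_comp e.measurableEmbedding]
  have hint' := hmp.integrable_comp_of_integrable hint
  refine (integral_prod _ hint').trans ?_
  refine integral_congr_ae (Eventually.of_forall fun s => ?_)
  have hm : MeasurableSet (slice A s) := (slice_isCompact hA s).measurableSet
  calc _ = ∫ y, (slice A s).indicator (fun _ => s) y := by
        refine integral_congr_ae (Eventually.of_forall fun y => ?_)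
        simp only [Function.comp, he, piFinSuccAbove_symm_eq]
        by_cases hy : y ∈ slice A s
        · rw [indicator_of_mem hy, indicator_of_mem (by exact hy)]
          simp
        · rw [indicator_of_notMem hy, indicator_of_notMem (by exact hy)]
    _ = _ := by
        rw [integral_indicator hm]
        simp [Measure.real]

/-- The multiplicative Brunn–Minkowski inequality for compact convex sets in `ℝ^n`. -/
def MulBM (n : ℕ) : Prop :=
  ∀ (A C : Set (Fin n → ℝ)) (s t : ℝ), IsCompact A → IsCompact C → Convex ℝ A → Convex ℝ C →
    0 < s → 0 < t → s + t = 1 → volume A ^ s * volume C ^ t ≤ volume (s • A + t • C)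

lemma ofReal_density_le {n : ℕ} (hBM : MulBM n) {A C : Set (Fin (n + 1) → ℝ)}
    (hA : IsCompact A) (hC : IsCompact C) (hAc : Convex ℝ A) (hCc : Convex ℝ C)
    {s t : ℝ} (hs : 0 < s) (ht : 0 < t) (hst : s + t = 1) (x y : ℝ) :
    ENNReal.ofReal ((volume (slice A x)).toReal ^ s * (volume (slice C y)).toReal ^ t) ≤
      volume (slice (s • A + t • C) (s * x + t * y)) := by
  rw [ENNReal.ofReal_mul (by positivity), ← ENNReal.ofReal_rpow_of_nonneg (by positivity) hs.le,
    ← ENNReal.ofReal_rpow_of_nonneg (by positivity) ht.le,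
    ENNReal.ofReal_toReal (slice_isCompact hA x).measure_lt_top.ne,
    ENNReal.ofReal_toReal (slice_isCompact hC y).measure_lt_top.ne]
  exact (hBM _ _ s t (slice_isCompact hA x) (slice_isCompact hC y) (slice_convex hAc x)
    (slice_convex hCc y) hs ht hst).trans (measure_mono (slice_combo A C s t x y))

/-- The slice volumes are log-concave. -/
lemma density_logConcave {n : ℕ} (hBM : MulBM n) {A : Set (Fin (n + 1) → ℝ)}
    (hA : IsCompact A) (hAc : Convex ℝ A)
    {s t : ℝ} (hs : 0 < s) (ht : 0 < t) (hst : s + t = 1) (x y : ℝ) :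
    (volume (slice A x)).toReal ^ s * (volume (slice A y)).toReal ^ t ≤
      (volume (slice A (s * x + t * y))).toReal := by
  have h := ofReal_density_le hBM hA hA hAc hAc hs ht hst x y
  rw [← hAc.add_smul hs.le ht.le, hst, one_smul] at h
  exact (ENNReal.ofReal_le_iff_le_toReal (slice_isCompact hA _).measure_lt_top.ne).1 h

/-- For a convex body the slice volumes form a density on an interval `(a, b)`, and `b` is the
value of the support function in the direction of the zeroth coordinate. -/
lemma exists_isBump {n : ℕ} (hBM : MulBM n) {A : Set (Fin (n + 1) → ℝ)}
    (hA : IsCompact A) (hAc : Convex ℝ A) (hpos : volume A ≠ 0) :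
    ∃ a b, IsBump (fun s => (volume (slice A s)).toReal) a b ∧
      ∀ c, (∀ x ∈ A, x 0 ≤ c) ↔ b ≤ c := by
  set f : ℝ → ℝ := fun s => (volume (slice A s)).toReal with hf
  have hfin : ∀ s, volume (slice A s) ≠ ∞ := fun s => (slice_isCompact hA s).measure_lt_top.ne
  have hf0 : ∀ s, 0 ≤ f s := fun s => ENNReal.toReal_nonneg
  have hvol := volume_eq_lintegral_slice hA.measurableSet
  have hint : Integrable f := by
    refine integrable_toReal_of_lintegral_ne_top
      (measurable_slice_volume hA.measurableSet).aemeasurable ?_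
    rw [← hvol]
    exact hA.measure_lt_top.ne
  set S : Set ℝ := {s | 0 < f s} with hS
  have hlc : ∀ {s t : ℝ}, 0 < s → 0 < t → s + t = 1 → ∀ x y,
      f x ^ s * f y ^ t ≤ f (s * x + t * y) :=
    fun hs ht hst x y => density_logConcave hBM hA hAc hs ht hst x y
  have hSc : Convex ℝ S := by
    rw [convex_iff_forall_pos]
    intro x hx y hy s t hs ht hst
    have hx' : 0 < f x := hx
    have hy' : 0 < f y := hy
    exact lt_of_lt_of_le (by positivity) (hlc hs ht hst x y)
  have hSA : ∀ s ∈ S, ∃ p ∈ A, p 0 = s := by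
    intro s hs
    have hs' : 0 < f s := hs
    have hne : (slice A s).Nonempty := by
      by_contra hemp
      rw [not_nonempty_iff_eq_empty] at hemp
      simp [hf, hemp] at hs'
    obtain ⟨y, hy⟩ := hne
    exact ⟨_, hy, by simp⟩
  have himg : IsCompact ((fun p : Fin (n + 1) → ℝ => p 0) '' A) := hA.image (continuous_apply 0)
  have hSsub : S ⊆ (fun p : Fin (n + 1) → ℝ => p 0) '' A := fun s hs => hSA s hs
  have hSa : BddAbove S := himg.bddAbove.mono hSsub
  have hSb : BddBelow S := himg.bddBelow.mono hSsub
  have hnon : S.Nontrivial := by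
    by_contra hsub
    rw [not_nontrivial_iff] at hsub
    apply hpos
    rw [hvol, lintegral_eq_zero_iff (measurable_slice_volume hA.measurableSet)]
    have hnull : volume S = 0 := hsub.measure_zero volume
    rw [← compl_compl S] at hnull
    filter_upwards [mem_ae_iff.2 hnull] with s hs
    have : f s = 0 := le_antisymm (not_lt.1 hs) (hf0 s)
    simpa [hf, ENNReal.toReal_eq_zero_iff, hfin] using this
  have hlt : sInf S < sSup S := by
    obtain ⟨x, hx, y, hy, hxy⟩ := hnon.exists_lt
    exact (csInf_le hSb hx).trans_lt (hxy.trans_le (le_csSup hSa hy))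
  have hIoo : Ioo (sInf S) (sSup S) ⊆ S := by
    intro x hx
    obtain ⟨u, hu, hux⟩ := exists_lt_of_csInf_lt hnon.nonempty hx.1
    obtain ⟨v, hv, hxv⟩ := exists_lt_of_lt_csSup hnon.nonempty hx.2
    exact hSc.ordConnected.out hu hv ⟨hux.le, hxv.le⟩
  refine ⟨sInf S, sSup S, ⟨hlt, ?_, fun x hx => hIoo hx, ?_, hint⟩, fun c => ⟨?_, ?_⟩⟩
  · have hconc : ConcaveOn ℝ (Ioo (sInf S) (sSup S)) fun x => Real.log (f x) := by
      refine concaveOn_iff_forall_pos.2 ⟨convex_Ioo _ _, ?_⟩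
      intro x hx y hy s t hs ht hst
      have hx' : 0 < f x := hIoo hx
      have hy' : 0 < f y := hIoo hy
      simp only [smul_eq_mul]
      rw [← Real.log_rpow hx', ← Real.log_rpow hy', ← Real.log_mul (by positivity) (by positivity)]
      exact Real.log_le_log (by positivity) (hlc hs ht hst x y)
    have := (hconc.continuousOn isOpen_Ioo).rexp
    refine this.congr fun x hx => ?_
    exact (Real.exp_log (hIoo hx)).symm
  · intro x hx
    by_contra hne
    have : x ∈ S := lt_of_le_of_ne (hf0 x) (Ne.symm hne)
    exact hx ⟨csInf_le hSb this, le_csSup hSa this⟩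
  · intro hc
    refine csSup_le hnon.nonempty fun s hs => ?_
    obtain ⟨p, hp, rfl⟩ := hSA s hs
    exact hc p hp
  · intro hbc p hp
    refine le_trans ?_ hbc
    by_contra! hcon
    obtain ⟨y, hy⟩ := hnon.nonempty
    have hyb : y ≤ sSup S := le_csSup hSa hy
    -- A point of `A` beyond `b` would, together with a slice of positive volume, span a cone in
    -- `A` whose slices slightly beyond `b` still have positive volume.
    set w := (sSup S + p 0) / 2 with hw
    set l := (p 0 - w) / (p 0 - y) with hl
    have hl0 : 0 < l := div_pos (by linarith) (by linarith)
    have hl1 : l ≤ 1 := (div_le_one (by linarith)).2 (by linarith)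
    have hwl : l * y + (1 - l) * p 0 = w := by
      have : l * (p 0 - y) = p 0 - w := div_mul_cancel₀ _ (by linarith)
      linarith
    have hsub : AffineMap.homothety (fun i : Fin n => p i.succ) l '' slice A y ⊆ slice A w := by
      rintro _ ⟨u, hu, rfl⟩
      have hp' : (Fin.cons (p 0) (fun i : Fin n => p i.succ) : Fin (n + 1) → ℝ) ∈ A := by
        convert hp using 1
        exact Fin.cons_self_tail p
      have := hAc hu hp' hl0.le (sub_nonneg.2 hl1) (by ring)
      rw [cons_combo, hwl] at this
      change (Fin.cons w _ : Fin (n + 1) → ℝ) ∈ A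
      convert this using 2
      rw [AffineMap.homothety_apply]
      ext i
      simp
      ring
    have hwS : w ∈ S := by
      have h1 := measure_mono (μ := volume) hsub
      rw [Measure.addHaar_image_homothety] at h1
      have hy' : 0 < f y := hy
      refine ENNReal.toReal_pos (ne_of_gt (lt_of_lt_of_le ?_ h1)) (hfin w)
      refine ENNReal.mul_pos ?_ ?_
      · simp [hl0.ne']
      · intro h0
        simp [hf, h0] at hy'
    have := le_csSup hSa hwS
    linarith

lemma integral_density {n : ℕ} {A : Set (Fin (n + 1) → ℝ)} (hA : IsCompact A) :
    ∫ s, (volume (slice A s)).toReal = (volume A).toReal := by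
  rw [integral_toReal (measurable_slice_volume hA.measurableSet).aemeasurable
    (Eventually.of_forall fun s => (slice_isCompact hA s).measure_lt_top),
    ← volume_eq_lintegral_slice hA.measurableSet]

lemma mulBM (n : ℕ) : MulBM n := by
  induction n with
  | zero =>
    intro A C s t hA hC hAc hCc hs ht hst
    rcases A.eq_empty_or_nonempty with rfl | hAne
    · simp [ENNReal.zero_rpow_of_pos hs]
    rcases C.eq_empty_or_nonempty with rfl | hCne
    · simp [ENNReal.zero_rpow_of_pos ht]
    have h1 : ∀ D : Set (Fin 0 → ℝ), D.Nonempty → volume D = 1 := by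
      intro D hD
      rw [Subsingleton.eq_univ_of_nonempty hD]
      simp [volume_pi]
    rw [h1 A hAne, h1 C hCne, h1 _ (hAne.smul_set.add hCne.smul_set)]
    simp
  | succ n ih =>
    intro A C s t hA hC hAc hCc hs ht hst
    by_cases hA0 : volume A = 0
    · simp [hA0, ENNReal.zero_rpow_of_pos hs]
    by_cases hC0 : volume C = 0
    · simp [hC0, ENNReal.zero_rpow_of_pos ht]
    obtain ⟨a, b, hf, -⟩ := exists_isBump ih hA hAc hA0
    obtain ⟨a', b', hg, -⟩ := exists_isBump ih hC hCc hC0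
    have := prekopa_leindler_bump
      (h := fun x => volume (slice (s • A + t • C) x)) hf hg hs ht hst
      (ofReal_density_le ih hA hC hAc hCc hs ht hst)
    rw [integral_density hA, integral_density hC, ← volume_eq_lintegral_slice
      ((hA.smul s).add (hC.smul t)).measurableSet, ENNReal.ofReal_mul (by positivity),
      ← ENNReal.ofReal_rpow_of_nonneg (by positivity) hs.le,
      ← ENNReal.ofReal_rpow_of_nonneg (by positivity) ht.le,
      ENNReal.ofReal_toReal hA.measure_lt_top.ne, ENNReal.ofReal_toReal hC.measure_lt_top.ne]
      at this
    exact this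

/-- Equality case of Brunn–Minkowski for two convex bodies of equal volume with the same moment
in the zeroth direction: their support functions agree in that direction. -/
lemma support_eq_of_volume_midpoint_le {n : ℕ} {A C : Set (Fin (n + 1) → ℝ)}
    (hA : IsCompact A) (hC : IsCompact C) (hAc : Convex ℝ A) (hCc : Convex ℝ C)
    (hpos : volume A ≠ 0) (heq : volume A = volume C)
    (hmom : ∫ x in A, x 0 = ∫ x in C, x 0)
    (hle : volume ((1 / 2 : ℝ) • A + (1 / 2 : ℝ) • C) ≤ volume A) (c : ℝ)
    (hc : ∀ x ∈ A, x 0 ≤ c) : ∀ x ∈ C, x 0 ≤ c := by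
  obtain ⟨a, b, hf, hb⟩ := exists_isBump (mulBM n) hA hAc hpos
  obtain ⟨a', b', hg, hb'⟩ := exists_isBump (mulBM n) hC hCc (heq ▸ hpos)
  have hbb : b = b' := by
    refine prekopa_leindler_bump_eq
      (h := fun x => volume (slice ((1 / 2 : ℝ) • A + (1 / 2 : ℝ) • C) x)) hf hg ?_ ?_
      (ofReal_density_le (mulBM n) hA hC hAc hCc (by norm_num) (by norm_num) (by norm_num)) ?_
    · rw [integral_density hA, integral_density hC, heq]
    · rw [← integral_coord_eq_slice hA, ← integral_coord_eq_slice hC, hmom]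
    · rw [integral_density hA, ENNReal.ofReal_toReal hA.measure_lt_top.ne,
        ← volume_eq_lintegral_slice ((hA.smul _).add (hC.smul _)).measurableSet]
      exact hle
  exact (hb' c).2 (hbb ▸ (hb c).1 hc)

/-! ### Brunn–Minkowski in Euclidean space and extremal pairs -/

/-- Multiplicative Brunn–Minkowski in Euclidean space, transported from `Fin d → ℝ`. -/
lemma mulBM_euclidean {d : ℕ} {A C : Set (EuclideanSpace ℝ (Fin d))} {s t : ℝ}
    (hA : IsCompact A) (hC : IsCompact C) (hAc : Convex ℝ A) (hCc : Convex ℝ C)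
    (hs : 0 < s) (ht : 0 < t) (hst : s + t = 1) :
    volume A ^ s * volume C ^ t ≤ volume (s • A + t • C) := by
  set L := EuclideanSpace.equiv (Fin d) ℝ with hL
  have hvol : ∀ D : Set (EuclideanSpace ℝ (Fin d)), volume (L '' D) = volume D := by
    intro D
    have hmp := (EuclideanSpace.volume_preserving_symm_measurableEquiv_toLp (Fin d))
    have := hmp.measure_preimage_equiv (L '' D)
    rw [← this]
    congr 1
    exact preimage_image_eq D L.injective
  have h := mulBM d (L '' A) (L '' C) s t (hA.image L.continuous) (hC.image L.continuous)
    (hAc.linear_image L.toLinearMap) (hCc.linear_image L.toLinearMap) hs ht hst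
  rw [← image_smul_set, ← image_smul_set, ← Set.image_add, hvol, hvol, hvol] at h
  exact h

/-- The Brunn–Minkowski inequality for compact convex sets. It follows from the multiplicative
form applied to the rescalings of volume one. -/
lemma addBM {d : ℕ} (hd : d ≠ 0) {A C : Set (EuclideanSpace ℝ (Fin d))}
    (hA : IsCompact A) (hC : IsCompact C) (hAc : Convex ℝ A) (hCc : Convex ℝ C)
    (hAne : A.Nonempty) (hCne : C.Nonempty) :
    volume A ^ ((1 : ℝ) / d) + volume C ^ ((1 : ℝ) / d) ≤ volume (A + C) ^ ((1 : ℝ) / d) := by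
  have he : (0 : ℝ) < (1 : ℝ) / d := by positivity
  by_cases hA0 : volume A = 0
  · obtain ⟨a, ha⟩ := hAne
    rw [hA0, ENNReal.zero_rpow_of_pos he, zero_add]
    refine ENNReal.rpow_le_rpow ?_ he.le
    rw [← measure_vadd volume a C]
    refine measure_mono ?_
    rintro _ ⟨c, hc, rfl⟩
    exact Set.add_mem_add ha hc
  by_cases hC0 : volume C = 0
  · obtain ⟨c, hc⟩ := hCne
    rw [hC0, ENNReal.zero_rpow_of_pos he, add_zero]
    refine ENNReal.rpow_le_rpow ?_ he.le
    rw [← measure_vadd volume c A, add_comm A C]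
    refine measure_mono ?_
    rintro _ ⟨a, ha, rfl⟩
    exact Set.add_mem_add hc ha
  have hAf : volume A ≠ ∞ := hA.measure_lt_top.ne
  have hCf : volume C ≠ ∞ := hC.measure_lt_top.ne
  obtain ⟨x, hx, hxA⟩ : ∃ x : ℝ, 0 < x ∧ volume A ^ ((1 : ℝ) / d) = ENNReal.ofReal x := by
    have h1 : volume A ^ ((1 : ℝ) / d) ≠ ∞ := ENNReal.rpow_ne_top_of_nonneg he.le hAf
    exact ⟨_, ENNReal.toReal_pos (by simp [ENNReal.rpow_eq_zero_iff, hA0, hAf]) h1,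
      (ENNReal.ofReal_toReal h1).symm⟩
  obtain ⟨y, hy, hyC⟩ : ∃ y : ℝ, 0 < y ∧ volume C ^ ((1 : ℝ) / d) = ENNReal.ofReal y := by
    have h1 : volume C ^ ((1 : ℝ) / d) ≠ ∞ := ENNReal.rpow_ne_top_of_nonneg he.le hCf
    exact ⟨_, ENNReal.toReal_pos (by simp [ENNReal.rpow_eq_zero_iff, hC0, hCf]) h1,
      (ENNReal.ofReal_toReal h1).symm⟩
  have hroot : ∀ (v : ℝ≥0∞) (x : ℝ), 0 < x → v ^ ((1 : ℝ) / d) = ENNReal.ofReal x →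
      v = ENNReal.ofReal (x ^ d) := by
    intro v x hx h
    rw [ENNReal.ofReal_pow hx.le, ← h, ← ENNReal.rpow_natCast, ← ENNReal.rpow_mul,
      one_div_mul_cancel (by positivity), ENNReal.rpow_one]
  have hunit : ∀ (D : Set (EuclideanSpace ℝ (Fin d))) (x : ℝ), 0 < x →
      volume D ^ ((1 : ℝ) / d) = ENNReal.ofReal x → volume (x⁻¹ • D) = 1 := by
    intro D x hx h
    rw [Measure.addHaar_smul, hroot _ x hx h, finrank_euclideanSpace_fin,
      abs_of_pos (by positivity), ← ENNReal.ofReal_mul (by positivity), ← mul_pow,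
      inv_mul_cancel₀ hx.ne', one_pow, ENNReal.ofReal_one]
  have h := mulBM_euclidean (hA.smul x⁻¹) (hC.smul y⁻¹) (hAc.smul x⁻¹) (hCc.smul y⁻¹)
    (s := x / (x + y)) (t := y / (x + y)) (by positivity) (by positivity) (by field_simp)
  rw [hunit A x hx hxA, hunit C y hy hyC, ENNReal.one_rpow, ENNReal.one_rpow, one_mul, smul_smul,
    smul_smul, show x / (x + y) * x⁻¹ = (x + y)⁻¹ by field_simp,
    show y / (x + y) * y⁻¹ = (x + y)⁻¹ by field_simp, ← smul_add, Measure.addHaar_smul,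
    finrank_euclideanSpace_fin, abs_of_pos (by positivity), inv_pow,
    ENNReal.ofReal_inv_of_pos (by positivity), mul_comm, ← div_eq_mul_inv,
    ENNReal.le_div_iff_mul_le
      (Or.inl (ENNReal.ofReal_pos.2 (by positivity)).ne') (Or.inl ENNReal.ofReal_ne_top), one_mul] at h
  rw [hxA, hyC, ← ENNReal.ofReal_add hx.le hy.le]
  calc ENNReal.ofReal (x + y) = ENNReal.ofReal ((x + y) ^ d) ^ ((1 : ℝ) / d) := by
        rw [ENNReal.ofReal_pow (by positivity), ← ENNReal.rpow_natCast, ← ENNReal.rpow_mul,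
          mul_one_div_cancel (by positivity), ENNReal.rpow_one]
    _ ≤ _ := by gcongr

/-- An extremal pair stays extremal under Minkowski averaging over isometries, so the averaged
body cannot have larger volume. -/
lemma volume_average_le {d : ℕ} (hd : d ≠ 0) {A C : Set (EuclideanSpace ℝ (Fin d))} {r : ℝ}
    (hA : IsCompact A) (hC : IsCompact C) (hAc : Convex ℝ A) (hCc : Convex ℝ C)
    (hAne : A.Nonempty) (hCne : C.Nonempty) (hsub : A + C ⊆ closedBall 0 r)
    (hle : volume (closedBall (0 : EuclideanSpace ℝ (Fin d)) r) ^ ((1 : ℝ) / d) ≤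
      volume A ^ ((1 : ℝ) / d) + volume C ^ ((1 : ℝ) / d))
    (P Q : EuclideanSpace ℝ (Fin d) ≃ₗᵢ[ℝ] EuclideanSpace ℝ (Fin d)) :
    volume ((1 / 2 : ℝ) • P '' A + (1 / 2 : ℝ) • Q '' A) ≤ volume A := by
  have he : (0 : ℝ) < (1 : ℝ) / d := by positivity
  have hvol : ∀ (R : EuclideanSpace ℝ (Fin d) ≃ₗᵢ[ℝ] EuclideanSpace ℝ (Fin d))
      (D : Set (EuclideanSpace ℝ (Fin d))), volume (R '' D) = volume D := by
    intro R D
    rw [LinearIsometryEquiv.image_eq_preimage_symm]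
    exact R.symm.measurePreserving.measure_preimage_equiv (f := R.symm.toMeasurableEquiv) D
  have hcpt : ∀ D : Set (EuclideanSpace ℝ (Fin d)), IsCompact D →
      IsCompact ((1 / 2 : ℝ) • P '' D + (1 / 2 : ℝ) • Q '' D) := fun D hD =>
    ((hD.image P.continuous).smul _).add ((hD.image Q.continuous).smul _)
  have hcvx : ∀ D : Set (EuclideanSpace ℝ (Fin d)), Convex ℝ D →
      ∀ R : EuclideanSpace ℝ (Fin d) ≃ₗᵢ[ℝ] EuclideanSpace ℝ (Fin d), Convex ℝ (R '' D) :=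
    fun D hD R => hD.linear_image R.toLinearEquiv.toLinearMap
  have hge : ∀ D : Set (EuclideanSpace ℝ (Fin d)), IsCompact D → Convex ℝ D →
      volume D ≤ volume ((1 / 2 : ℝ) • P '' D + (1 / 2 : ℝ) • Q '' D) := by
    intro D hD hDc
    have := mulBM_euclidean (hD.image P.continuous) (hD.image Q.continuous) (hcvx D hDc P)
      (hcvx D hDc Q) (s := 1 / 2) (t := 1 / 2) (by norm_num) (by norm_num) (by norm_num)
    rwa [hvol, hvol, ← ENNReal.rpow_add_of_nonneg _ _ (by norm_num) (by norm_num),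
      show (1 / 2 : ℝ) + 1 / 2 = 1 by norm_num, ENNReal.rpow_one] at this
  set A' := (1 / 2 : ℝ) • P '' A + (1 / 2 : ℝ) • Q '' A with hA'
  set C' := (1 / 2 : ℝ) • P '' C + (1 / 2 : ℝ) • Q '' C with hC'
  have hsub' : A' + C' ⊆ closedBall 0 r := by
    rintro _ ⟨_, ⟨_, ⟨_, ⟨a, ha, rfl⟩, rfl⟩, _, ⟨_, ⟨b, hb, rfl⟩, rfl⟩, rfl⟩,
      _, ⟨_, ⟨_, ⟨u, hu, rfl⟩, rfl⟩, _, ⟨_, ⟨v, hv, rfl⟩, rfl⟩, rfl⟩, rfl⟩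
    have h1 := hsub (Set.add_mem_add ha hu)
    have h2 := hsub (Set.add_mem_add hb hv)
    rw [mem_closedBall_zero_iff] at h1 h2 ⊢
    rw [← P.norm_map] at h1
    rw [← Q.norm_map] at h2
    have hrw : (1 / 2 : ℝ) • P a + (1 / 2 : ℝ) • Q b + ((1 / 2 : ℝ) • P u + (1 / 2 : ℝ) • Q v) =
        (1 / 2 : ℝ) • P (a + u) + (1 / 2 : ℝ) • Q (b + v) := by
      rw [map_add, map_add]
      module
    change ‖(1 / 2 : ℝ) • P a + (1 / 2 : ℝ) • Q b + ((1 / 2 : ℝ) • P u + (1 / 2 : ℝ) • Q v)‖ ≤ r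
    rw [hrw]
    refine (norm_add_le _ _).trans ?_
    rw [norm_smul, norm_smul, Real.norm_of_nonneg (by norm_num)]
    linarith
  have hconv : ∀ D : Set (EuclideanSpace ℝ (Fin d)), Convex ℝ D →
      Convex ℝ ((1 / 2 : ℝ) • P '' D + (1 / 2 : ℝ) • Q '' D) := fun D hD =>
    ((hcvx D hD P).smul _).add ((hcvx D hD Q).smul _)
  have hbm := addBM hd (hcpt A hA) (hcpt C hC) (hconv A hAc) (hconv C hCc)
    ((hAne.image P).smul_set.add (hAne.image Q).smul_set)
    ((hCne.image P).smul_set.add (hCne.image Q).smul_set)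
  have hchain : volume A' ^ ((1 : ℝ) / d) + volume C' ^ ((1 : ℝ) / d) ≤
      volume A ^ ((1 : ℝ) / d) + volume C' ^ ((1 : ℝ) / d) :=
    calc _ ≤ volume (A' + C') ^ ((1 : ℝ) / d) := hbm
      _ ≤ volume (closedBall (0 : EuclideanSpace ℝ (Fin d)) r) ^ ((1 : ℝ) / d) := by gcongr
      _ ≤ volume A ^ ((1 : ℝ) / d) + volume C ^ ((1 : ℝ) / d) := hle
      _ ≤ _ := add_le_add le_rfl (ENNReal.rpow_le_rpow (hge C hC hCc) he.le)
  have hfin : volume C' ^ ((1 : ℝ) / d) ≠ ∞ :=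
    ENNReal.rpow_ne_top_of_nonneg he.le (hcpt C hC).measure_lt_top.ne
  exact (ENNReal.rpow_le_rpow_iff he).1 ((ENNReal.add_le_add_iff_right hfin).1 hchain)

/-- The first member of an extremal pair, centred at its barycentre, has the same support
function in any two unit directions. -/
lemma support_eq_of_extremal {d : ℕ} (hd : d ≠ 0) {A C : Set (EuclideanSpace ℝ (Fin d))} {r : ℝ}
    (hA : IsCompact A) (hC : IsCompact C) (hAc : Convex ℝ A) (hCc : Convex ℝ C)
    (hA0 : volume A ≠ 0) (hCne : C.Nonempty) (hsub : A + C ⊆ closedBall 0 r)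
    (hle : volume (closedBall (0 : EuclideanSpace ℝ (Fin d)) r) ^ ((1 : ℝ) / d) ≤
      volume A ^ ((1 : ℝ) / d) + volume C ^ ((1 : ℝ) / d))
    (hbar : ∫ x in A, x = 0) {v w : EuclideanSpace ℝ (Fin d)} (hv : ‖v‖ = 1) (hw : ‖w‖ = 1)
    {c : ℝ} (hc : ∀ x ∈ A, inner ℝ v x ≤ c) : ∀ x ∈ A, inner ℝ w x ≤ c := by
  obtain ⟨n, rfl⟩ := Nat.exists_eq_succ_of_ne_zero hd
  have hAne : A.Nonempty := nonempty_of_measure_ne_zero hA0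
  set e0 : EuclideanSpace ℝ (Fin (n + 1)) := EuclideanSpace.single 0 1 with he0
  have hne : ‖e0‖ = 1 := by simp [he0]
  -- an isometry taking a given unit vector to `e0`
  have hrot : ∀ u : EuclideanSpace ℝ (Fin (n + 1)), ‖u‖ = 1 →
      ∃ P : EuclideanSpace ℝ (Fin (n + 1)) ≃ₗᵢ[ℝ] EuclideanSpace ℝ (Fin (n + 1)),
        ∀ x, (P x) 0 = inner ℝ u x := by
    intro u hu
    refine ⟨(ℝ ∙ (u - e0))ᗮ.reflection, fun x => ?_⟩
    have h1 := Submodule.reflection_sub (hu.trans hne.symm)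
    rw [← ((ℝ ∙ (u - e0))ᗮ.reflection).inner_map_map u x, h1, he0,
      EuclideanSpace.inner_single_left]
    simp
  obtain ⟨P, hP⟩ := hrot v hv
  obtain ⟨Q, hQ⟩ := hrot w hw
  have havg := volume_average_le hd hA hC hAc hCc hAne hCne hsub hle P Q
  set L := EuclideanSpace.equiv (Fin (n + 1)) ℝ with hL
  have hmpL : MeasurePreserving L volume volume :=
    EuclideanSpace.volume_preserving_symm_measurableEquiv_toLp (Fin (n + 1))
  have hmp : ∀ R : EuclideanSpace ℝ (Fin (n + 1)) ≃ₗᵢ[ℝ] EuclideanSpace ℝ (Fin (n + 1)),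
      MeasurePreserving (fun x => L (R x)) volume volume := fun R =>
    hmpL.comp R.measurePreserving
  have hemb : ∀ R : EuclideanSpace ℝ (Fin (n + 1)) ≃ₗᵢ[ℝ] EuclideanSpace ℝ (Fin (n + 1)),
      MeasurableEmbedding (fun x => L (R x)) := fun R =>
    (R.toHomeomorph.trans L.toHomeomorph).measurableEmbedding
  have hvol : ∀ (R : EuclideanSpace ℝ (Fin (n + 1)) ≃ₗᵢ[ℝ] EuclideanSpace ℝ (Fin (n + 1))),
      volume ((fun x => L (R x)) '' A) = volume A := by
    intro R
    rw [← (hmp R).measure_preimage_emb (hemb R), preimage_image_eq _ (hemb R).injective]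
  have hcpt : ∀ R : EuclideanSpace ℝ (Fin (n + 1)) ≃ₗᵢ[ℝ] EuclideanSpace ℝ (Fin (n + 1)),
      IsCompact ((fun x => L (R x)) '' A) := fun R =>
    hA.image (L.continuous.comp R.continuous)
  have hcvx : ∀ R : EuclideanSpace ℝ (Fin (n + 1)) ≃ₗᵢ[ℝ] EuclideanSpace ℝ (Fin (n + 1)),
      Convex ℝ ((fun x => L (R x)) '' A) := fun R =>
    hAc.linear_image (L.toLinearMap ∘ₗ R.toLinearEquiv.toLinearMap)
  have hmom : ∀ (R : EuclideanSpace ℝ (Fin (n + 1)) ≃ₗᵢ[ℝ] EuclideanSpace ℝ (Fin (n + 1)))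
      (u : EuclideanSpace ℝ (Fin (n + 1))), (∀ x, (R x) 0 = inner ℝ u x) →
      ∫ x in (fun x => L (R x)) '' A, x 0 = 0 := by
    intro R u hu
    rw [(hmp R).setIntegral_image_emb (hemb R)]
    calc ∫ x in A, L (R x) 0 = ∫ x in A, inner ℝ u x := by
          refine integral_congr_ae (Eventually.of_forall fun x => ?_)
          exact hu x
      _ = inner ℝ u (∫ x in A, x) :=
          integral_inner (continuous_id.continuousOn.integrableOn_compact hA) u
      _ = 0 := by rw [hbar, inner_zero_right]
  have hmid : volume ((1 / 2 : ℝ) • (fun x => L (P x)) '' A + (1 / 2 : ℝ) •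
      (fun x => L (Q x)) '' A) ≤ volume ((fun x => L (P x)) '' A) := by
    rw [hvol]
    refine le_trans (le_of_eq ?_) havg
    have : (1 / 2 : ℝ) • (fun x => L (P x)) '' A + (1 / 2 : ℝ) • (fun x => L (Q x)) '' A =
        L '' ((1 / 2 : ℝ) • P '' A + (1 / 2 : ℝ) • Q '' A) := by
      rw [Set.image_add, image_smul_set, image_smul_set, image_image, image_image]
    rw [this, ← hmpL.measure_preimage_emb L.toHomeomorph.measurableEmbedding,
      preimage_image_eq _ L.injective]
  have key := support_eq_of_volume_midpoint_le (hcpt P) (hcpt Q) (hcvx P) (hcvx Q)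
    (by rwa [hvol]) (by rw [hvol, hvol]) (by rw [hmom P v hP, hmom Q w hQ]) hmid c (by
      rintro _ ⟨x, hx, rfl⟩
      exact (hP x).trans_le (hc x hx))
  intro x hx
  rw [← hQ x]
  exact key _ ⟨x, hx, rfl⟩

/-- A compact convex set with the same support function in all unit directions is a ball. -/
lemma eq_closedBall_of_support {d : ℕ} {A : Set (EuclideanSpace ℝ (Fin d))}
    (hA : IsCompact A) (hAc : Convex ℝ A) (hAne : A.Nonempty)
    (h : ∀ v w : EuclideanSpace ℝ (Fin d), ‖v‖ = 1 → ‖w‖ = 1 → ∀ c : ℝ,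
      (∀ x ∈ A, inner ℝ v x ≤ c) → ∀ x ∈ A, inner ℝ w x ≤ c) :
    ∃ ρ : ℝ, 0 ≤ ρ ∧ A = closedBall 0 ρ := by
  obtain ⟨p, hp, hmax⟩ := hA.exists_isMaxOn hAne continuous_norm.continuousOn
  refine ⟨‖p‖, norm_nonneg p, Subset.antisymm (fun x hx => ?_) fun q hq => ?_⟩
  · rw [mem_closedBall_zero_iff]
    exact hmax hx
  rw [mem_closedBall_zero_iff] at hq
  by_contra hqA
  by_cases hp0 : p = 0
  · rw [hp0, norm_zero, norm_le_zero_iff] at hq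
    exact hqA (hq ▸ hp0 ▸ hp)
  obtain ⟨f, u, hfu, huq⟩ := geometric_hahn_banach_closed_point hAc hA.isClosed hqA
  set w := (InnerProductSpace.toDual ℝ (EuclideanSpace ℝ (Fin d))).symm f with hw
  have hwf : ∀ x, inner ℝ w x = f x := fun x => InnerProductSpace.toDual_symm_apply
  have hw0 : w ≠ 0 := by
    intro h0
    have h1 := hfu p hp
    rw [← hwf, h0, inner_zero_left] at h1
    rw [← hwf, h0, inner_zero_left] at huq
    linarith
  have hwn : 0 < ‖w‖ := norm_pos_iff.2 hw0
  have hpn : 0 < ‖p‖ := norm_pos_iff.2 hp0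
  have key := h (‖w‖⁻¹ • w) (‖p‖⁻¹ • p) (norm_smul_inv_norm (𝕜 := ℝ) hw0)
    (norm_smul_inv_norm (𝕜 := ℝ) hp0) (‖w‖⁻¹ * u) (by
      intro x hx
      rw [real_inner_smul_left, hwf]
      have := (hfu x hx).le
      gcongr) p hp
  rw [real_inner_smul_left, real_inner_self_eq_norm_sq] at key
  have h1 : ‖p‖⁻¹ * ‖p‖ ^ 2 = ‖p‖ := by field_simp
  have h2 : u < ‖w‖ * ‖p‖ :=
    calc u < inner ℝ w q := by rwa [hwf]
      _ ≤ ‖w‖ * ‖q‖ := real_inner_le_norm w q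
      _ ≤ ‖w‖ * ‖p‖ := by gcongr
  rw [h1, inv_mul_eq_div, le_div_iff₀ hwn] at key
  linarith

/-! ### Ball bodies -/

lemma isClosed_ballBody {d : ℕ} (r : ℝ) (X : Set (EuclideanSpace ℝ (Fin d))) :
    IsClosed (ballBody r X) := isClosed_biInter fun _ _ => isClosed_closedBall

lemma convex_ballBody {d : ℕ} (r : ℝ) (X : Set (EuclideanSpace ℝ (Fin d))) :
    Convex ℝ (ballBody r X) := convex_iInter₂ fun x _ => convex_closedBall x r

lemma ballBody_subset {d : ℕ} {r : ℝ} {X : Set (EuclideanSpace ℝ (Fin d))}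
    {x : EuclideanSpace ℝ (Fin d)} (hx : x ∈ X) : ballBody r X ⊆ closedBall x r :=
  biInter_subset_of_mem hx

lemma isCompact_ballBody {d : ℕ} {r : ℝ} {X : Set (EuclideanSpace ℝ (Fin d))}
    (hX : X.Nonempty) : IsCompact (ballBody r X) := by
  obtain ⟨x, hx⟩ := hX
  exact (isCompact_closedBall x r).of_isClosed_subset (isClosed_ballBody r X) (ballBody_subset hx)

lemma add_dist_le_of_closedBall_subset {d : ℕ} (hd : d ≠ 0) {p q : EuclideanSpace ℝ (Fin d)}
    {ρ r : ℝ} (hρ : 0 ≤ ρ) (h : closedBall p ρ ⊆ closedBall q r) : ρ + dist p q ≤ r := by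
  have : NeZero d := ⟨hd⟩
  obtain ⟨u, hu, hpq⟩ : ∃ u : EuclideanSpace ℝ (Fin d), ‖u‖ = 1 ∧ p - q = ‖p - q‖ • u := by
    by_cases h0 : p - q = 0
    · exact ⟨EuclideanSpace.single 0 1, by simp, by simp [h0]⟩
    · exact ⟨‖p - q‖⁻¹ • (p - q), norm_smul_inv_norm (𝕜 := ℝ) h0, by
        rw [smul_smul, mul_inv_cancel₀ (norm_ne_zero_iff.2 h0), one_smul]⟩
  have hmem : p + ρ • u ∈ closedBall q r := h (by
    simp [mem_closedBall, dist_eq_norm, norm_smul, hu, abs_of_nonneg hρ])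
  rw [mem_closedBall, dist_eq_norm, show p + ρ • u - q = (p - q) + ρ • u by abel, hpq,
    ← add_smul, norm_smul, hu, mul_one, Real.norm_of_nonneg (by positivity)] at hmem
  rw [dist_eq_norm]
  linarith

/-- A closed subset of a ball with the volume of the ball is the whole ball. -/
lemma eq_closedBall_of_volume_le {d : ℕ} {K : Set (EuclideanSpace ℝ (Fin d))}
    {a : EuclideanSpace ℝ (Fin d)} {r : ℝ} (hr : 0 < r) (hK : IsClosed K)
    (hsub : K ⊆ closedBall a r) (hvol : volume (closedBall a r) ≤ volume K) :
    K = closedBall a r := by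
  refine Subset.antisymm hsub ?_
  have h0 : volume (closedBall a r \ K) = 0 := by
    rw [measure_sdiff hsub hK.measurableSet.nullMeasurableSet
      (measure_ne_top_of_subset hsub measure_closedBall_lt_top.ne)]
    exact tsub_eq_zero_of_le hvol
  have h1 : ball a r \ K = ∅ := by
    rw [← (isOpen_ball.sdiff hK).measure_eq_zero_iff volume]
    exact measure_mono_null (sdiff_subset_sdiff_left ball_subset_closedBall) h0
  rw [← closure_ball a hr.ne']
  exact closure_minimal (sdiff_eq_empty.1 h1) hK

/-- The Brunn–Minkowski step: for a nonempty `r`-ball body `A ⊆ ℝ^d` with `A^r` nonempty,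
`V_d(A)^{1/d} + V_d(A^r)^{1/d} ≤ V_d(B[o,r])^{1/d}`, with equality iff `A` is a closed ball
of radius at most `r`. -/
theorem brunnMinkowski_rBallBody {d : ℕ} (hd : 1 < d) {r : ℝ} (hr : 0 < r)
    {X A : Set (EuclideanSpace ℝ (Fin d))} (hX : X.Nonempty) (hA : A = ballBody r X)
    (hAne : A.Nonempty) (hArne : (ballBody r A).Nonempty) :
    volume A ^ ((1 : ℝ) / d) + volume (ballBody r A) ^ ((1 : ℝ) / d) ≤
        volume (closedBall (0 : EuclideanSpace ℝ (Fin d)) r) ^ ((1 : ℝ) / d) ∧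
      (volume A ^ ((1 : ℝ) / d) + volume (ballBody r A) ^ ((1 : ℝ) / d) =
          volume (closedBall (0 : EuclideanSpace ℝ (Fin d)) r) ^ ((1 : ℝ) / d) ↔
        ∃ (p : EuclideanSpace ℝ (Fin d)) (ρ : ℝ), 0 ≤ ρ ∧ ρ ≤ r ∧ A = closedBall p ρ) := by
  have hd0 : d ≠ 0 := by omega
  have he : (0 : ℝ) < (1 : ℝ) / d := by positivity
  set D := ballBody r A with hD
  have hAcl : IsClosed A := hA ▸ isClosed_ballBody r X
  have hAcp : IsCompact A := hA ▸ isCompact_ballBody hX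
  have hAc : Convex ℝ A := hA ▸ convex_ballBody r X
  have hDcp : IsCompact D := isCompact_ballBody hAne
  have hDc : Convex ℝ D := convex_ballBody r A
  have hdist : ∀ a ∈ A, ∀ b ∈ D, ‖a - b‖ ≤ r := by
    intro a ha b hb
    rw [← dist_eq_norm, dist_comm]
    exact ballBody_subset ha hb
  have hsub : A + -D ⊆ closedBall 0 r := by
    rintro _ ⟨a, ha, b, hb, rfl⟩
    rw [mem_closedBall_zero_iff]
    simpa using hdist a ha (-b) hb
  have hvolneg : volume (-D) = volume D := Measure.measure_neg volume D
  have hineq : volume A ^ ((1 : ℝ) / d) + volume D ^ ((1 : ℝ) / d) ≤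
      volume (closedBall (0 : EuclideanSpace ℝ (Fin d)) r) ^ ((1 : ℝ) / d) := by
    rw [← hvolneg]
    exact (addBM hd0 hAcp hDcp.neg hAc hDc.neg hAne hArne.neg).trans
      (ENNReal.rpow_le_rpow (measure_mono hsub) he.le)
  have hball : ∀ q : EuclideanSpace ℝ (Fin d),
      volume (closedBall q r) = volume (closedBall (0 : EuclideanSpace ℝ (Fin d)) r) :=
    fun q => Measure.addHaar_closedBall_center volume q r
  refine ⟨hineq, ⟨fun heq => ?_, ?_⟩⟩
  · by_cases hA0 : volume A = 0
    · -- `A^r` fills the ball around each point of `A`, so `A` is a single point.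
      rw [hA0, ENNReal.zero_rpow_of_pos he, zero_add] at heq
      have hvol := (ENNReal.rpow_le_rpow_iff he).1 heq.ge
      have hDball : ∀ a ∈ A, D = closedBall a r := fun a ha =>
        eq_closedBall_of_volume_le hr hDcp.isClosed (ballBody_subset ha) (by rwa [hball a])
      obtain ⟨a, ha⟩ := hAne
      refine ⟨a, 0, le_rfl, hr.le, ?_⟩
      rw [closedBall_zero]
      refine Subset.antisymm (fun b hb => ?_) (singleton_subset_iff.2 ha)
      have := add_dist_le_of_closedBall_subset hd0 hr.le ((hDball b hb).symm.trans (hDball a ha)).le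
      exact dist_le_zero.1 (by linarith)
    by_cases hD0 : volume D = 0
    · rw [hD0, ENNReal.zero_rpow_of_pos he, add_zero] at heq
      have hvol := (ENNReal.rpow_le_rpow_iff he).1 heq.ge
      obtain ⟨x, hx⟩ := hX
      exact ⟨x, r, hr.le, le_rfl, eq_closedBall_of_volume_le hr hAcl
        (hA ▸ ballBody_subset hx) (by rwa [hball x])⟩
    -- Move the barycentre of `A` to the origin.
    set p : EuclideanSpace ℝ (Fin d) := (volume A).toReal⁻¹ • ∫ x in A, x with hp
    have hApos : 0 < (volume A).toReal := ENNReal.toReal_pos hA0 hAcp.measure_lt_top.ne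
    set A0 : Set (EuclideanSpace ℝ (Fin d)) := -p +ᵥ A with hA0def
    set C0 : Set (EuclideanSpace ℝ (Fin d)) := p +ᵥ -D with hC0def
    have hAv : volume A0 = volume A := measure_vadd volume (-p) A
    have hCv : volume C0 = volume D := (measure_vadd volume p (-D)).trans hvolneg
    have hA0cp : IsCompact A0 := hAcp.vadd (-p)
    have hA0c : Convex ℝ A0 := hAc.vadd (-p)
    have hsub0 : A0 + C0 ⊆ closedBall 0 r := by
      rintro _ ⟨_, ⟨a, ha, rfl⟩, _, ⟨b, hb, rfl⟩, rfl⟩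
      have : (-p +ᵥ a) + (p +ᵥ b) = a + b := by simp only [vadd_eq_add]; abel
      change (-p +ᵥ a) + (p +ᵥ b) ∈ closedBall 0 r
      rw [this]
      exact hsub (Set.add_mem_add ha hb)
    have hbar : ∫ x in A0, x = 0 := by
      have h1 : ∫ x in A0, x = ∫ x in A, (-p + x) :=
        (measurePreserving_add_left volume (-p)).setIntegral_image_emb
          (measurableEmbedding_addLeft (-p)) (fun x => x) A
      have hi : IntegrableOn (fun x : EuclideanSpace ℝ (Fin d) => x) A :=
        continuous_id.continuousOn.integrableOn_compact hAcp
      have hi' : IntegrableOn (fun _ : EuclideanSpace ℝ (Fin d) => -p) A :=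
        continuous_const.continuousOn.integrableOn_compact hAcp
      rw [h1, integral_add hi' hi, setIntegral_const, hp, smul_neg, smul_smul]
      simp [Measure.real, hApos.ne']
    have hA0ne : volume A0 ≠ 0 := by rwa [hAv]
    obtain ⟨ρ, hρ, hAρ⟩ := eq_closedBall_of_support hA0cp hA0c
      (nonempty_of_measure_ne_zero hA0ne) fun v w hv hw c hc =>
        support_eq_of_extremal hd0 hA0cp (hDcp.neg.vadd p) hA0c (hDc.neg.vadd p) hA0ne
          hArne.neg.vadd_set hsub0 (by rw [hAv, hCv, heq]) hbar hv hw hc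
    have hAball : A = closedBall p ρ := by
      have h1 : A = p +ᵥ A0 := by rw [hA0def, vadd_vadd]; simp
      rw [h1, hAρ, vadd_closedBall]
      simp
    obtain ⟨q, hq⟩ := hArne
    have hAq : closedBall p ρ ⊆ closedBall q r := by
      rw [← hAball]
      intro a ha
      rw [mem_closedBall, dist_eq_norm]
      exact hdist a ha q hq
    have := add_dist_le_of_closedBall_subset hd0 hρ hAq
    exact ⟨p, ρ, hρ, by linarith [dist_nonneg (x := p) (y := q)], hAball⟩
  · rintro ⟨p, ρ, hρ, hρr, hAball⟩
    refine le_antisymm hineq ?_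
    have hDsup : closedBall p (r - ρ) ⊆ D := by
      intro x hx
      refine mem_iInter₂.2 fun a ha => ?_
      rw [hAball] at ha
      rw [mem_closedBall] at *
      linarith [dist_triangle x p a, dist_comm p a]
    have hv : ∀ (q : EuclideanSpace ℝ (Fin d)) (t : ℝ), 0 ≤ t →
        volume (closedBall q t) ^ ((1 : ℝ) / d) = ENNReal.ofReal t *
          volume (ball (0 : EuclideanSpace ℝ (Fin d)) 1) ^ ((1 : ℝ) / d) := by
      intro q t ht
      rw [Measure.addHaar_closedBall volume q ht, finrank_euclideanSpace_fin,
        ENNReal.mul_rpow_of_nonneg _ _ he.le, ENNReal.ofReal_pow ht, ← ENNReal.rpow_natCast,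
        ← ENNReal.rpow_mul, mul_one_div_cancel (by positivity), ENNReal.rpow_one]
    calc _ = volume (closedBall p ρ) ^ ((1 : ℝ) / d) +
          volume (closedBall p (r - ρ)) ^ ((1 : ℝ) / d) := by
          rw [hv _ r hr.le, hv _ ρ hρ, hv _ (r - ρ) (by linarith), ← add_mul,
            ← ENNReal.ofReal_add hρ (by linarith), add_sub_cancel]
      _ ≤ _ := by
          rw [← hAball]
          gcongr
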